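/- arXiv:1709.04789 — 2 statements merged into one kernel-verified Lean document; each statement's English description precedes it below -/
import Mathlib

section
/- Write m = t(d+1) + α with t ≥ 1 and 0 ≤ α ≤ d, and let σ ⊆ B be a simplex satisfying property P_t (with associated subscripts i_r = 1 + (r−1)(d+1), j_r = j_1 + (r−1)(d+1), and largest subscript k = m + j_1 − (d+1)). Then σ is a critical cell if and only if either j_t = k, or σ = {b_1, b_{j_1}, b_{i_2}, b_{j_2}, …, b_{i_t}, b_{j_t}, b_{i_{t+1}}} with k = i_{t+1} = 1 + t(d+1). -/
open Finset

/-- The graph `G_m^d` on vertex set `Fin m ⊕ Fin m` (0-based indexing):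
`Sum.inl i` is the vertex `a_{i+1}` and `Sum.inr j` is the vertex `b_{j+1}` of the paper;
`a_i` is adjacent to `b_j` iff `(j - i) mod m ∈ {0, …, d-1}`. -/
def Gmd (m d : ℕ) : SimpleGraph (Fin m ⊕ Fin m) :=
  SimpleGraph.fromRel (fun u v =>
    ∃ i j : Fin m, u = Sum.inl i ∧ v = Sum.inr j ∧ (j.val + m - i.val) % m < d)

/-- A finite set of vertices is independent iff no two of its elements are adjacent. -/
def IsInd (m d : ℕ) (σ : Finset (Fin m ⊕ Fin m)) : Prop :=
  ∀ u ∈ σ, ∀ v ∈ σ, ¬ (Gmd m d).Adj u v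

/-- The face poset `P` of the independence complex `Ind (G_m^d)` (ordered by `⊆`),
including the empty simplex. -/
def faceP (m d : ℕ) : Set (Finset (Fin m ⊕ Fin m)) := {σ | IsInd m d σ}

/-- One step of the matching construction: `S_x(T) = {σ ∈ T | x ∉ σ, σ ∪ {x} ∈ T}`. -/
def stepS {α : Type*} [DecidableEq α] (x : α) (T : Set (Finset α)) : Set (Finset α) :=
  {σ | σ ∈ T ∧ x ∉ σ ∧ insert x σ ∈ T}

/-- The survivors of one step: `T \ (S_x(T) ∪ μ_x(S_x(T)))`. -/
def stepSurv {α : Type*} [DecidableEq α] (x : α) (T : Set (Finset α)) : Set (Finset α) :=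
  T \ (stepS x T ∪ (insert x) '' (stepS x T))

/-- Iterating the matching construction along a list of vertices. -/
def phase {α : Type*} [DecidableEq α] (T : Set (Finset α)) (l : List α) : Set (Finset α) :=
  l.foldl (fun T x => stepSurv x T) T

/-- The list `a_1, …, a_m`. -/
def listA (m : ℕ) : List (Fin m ⊕ Fin m) := (List.finRange m).map Sum.inl
/-- The list `b_1, …, b_m`. -/
def listB (m : ℕ) : List (Fin m ⊕ Fin m) := (List.finRange m).map Sum.inr

/-- `S_{a_{i+1}}` (0-based `i`): the set matched with `a_{i+1}` at stage `i+1` of phase one. -/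
def Sa (m d : ℕ) (i : Fin m) : Set (Finset (Fin m ⊕ Fin m)) :=
  stepS (Sum.inl i) (phase (faceP m d) ((listA m).take i.val))

/-- `M = P \ (S_1 ∪ μ_1(S_1))`, the simplices surviving phase one. -/
def setM (m d : ℕ) : Set (Finset (Fin m ⊕ Fin m)) := phase (faceP m d) (listA m)

/-- `S_{b_{i+1}}` (0-based `i`): the set matched with `b_{i+1}` at stage `i+1` of phase two. -/
def Sb (m d : ℕ) (i : Fin m) : Set (Finset (Fin m ⊕ Fin m)) :=
  stepS (Sum.inr i) (phase (setM m d) ((listB m).take i.val))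

/-- `𝒮_{a_{i+1}} = S_{a_{i+1}} ∪ μ_{a_{i+1}}(S_{a_{i+1}})`. -/
def scriptSa (m d : ℕ) (i : Fin m) : Set (Finset (Fin m ⊕ Fin m)) :=
  Sa m d i ∪ (insert (Sum.inl i)) '' (Sa m d i)

/-- `𝒮_{b_{i+1}} = S_{b_{i+1}} ∪ μ_{b_{i+1}}(S_{b_{i+1}})`. -/
def scriptSb (m d : ℕ) (i : Fin m) : Set (Finset (Fin m ⊕ Fin m)) :=
  Sb m d i ∪ (insert (Sum.inr i)) '' (Sb m d i)

/-- The critical cells `C = P \ (S ∪ μ(S))`. -/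
def setC (m d : ℕ) : Set (Finset (Fin m ⊕ Fin m)) :=
  faceP m d \ ((⋃ i : Fin m, scriptSa m d i) ∪ (⋃ i : Fin m, scriptSb m d i))

/-- The matching relation: `MatchRel σ τ` iff `τ = μ(σ)` for `σ ∈ S = S_1 ∪ S_2`. -/
def MatchRel (m d : ℕ) (σ τ : Finset (Fin m ⊕ Fin m)) : Prop :=
  (∃ i : Fin m, σ ∈ Sa m d i ∧ τ = insert (Sum.inl i) σ) ∨
  (∃ i : Fin m, σ ∈ Sb m d i ∧ τ = insert (Sum.inr i) σ)

/-- `B_{s+1} = {b_{s+1}, b_{s+2}, …, b_{s+m-d}}` (0-based `s`, subscripts mod `m`). -/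
def Bset (m d : ℕ) (s : Fin m) : Finset (Fin m ⊕ Fin m) :=
  (Finset.univ.filter (fun j : Fin m => (j.val + m - s.val) % m < m - d)).image Sum.inr

/-- `b_{n+1} ∈ σ` (0-based subscript `n`). -/
def hasB (m : ℕ) (σ : Finset (Fin m ⊕ Fin m)) (n : ℕ) : Prop :=
  ∃ j : Fin m, j.val = n ∧ Sum.inr j ∈ σ

/-- `σ ⊆ B`. -/
def onlyB (m : ℕ) (σ : Finset (Fin m ⊕ Fin m)) : Prop :=
  ∀ v ∈ σ, ∃ j : Fin m, v = Sum.inr j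

/-- Property `P_l` of the paper, with parameter `j1` (0-based: the paper's `j_1 - 1`, so
`1 ≤ j1 ≤ d`).  With 0-based subscripts `i_r = (r-1)(d+1)`, `j_r = j1 + (r-1)(d+1)` and
`k = m + j1 - (d+1)`:  σ ∈ M, σ ⊆ B, the `2l` smallest subscripts of σ are exactly
`0 = i_1, j_1, i_2, j_2, …, i_l, j_l`, the largest subscript is `k`, and
`σ \ {b_{i_r}} ∉ M`, `σ \ {b_{j_r}} ∉ M` for all `1 ≤ r ≤ l`. -/
def propP (m d l j1 : ℕ) (σ : Finset (Fin m ⊕ Fin m)) : Prop :=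
  σ ∈ setM m d ∧ onlyB m σ ∧ 1 ≤ j1 ∧ j1 ≤ d ∧
  (∀ r, 1 ≤ r → r ≤ l → hasB m σ ((r-1)*(d+1)) ∧ hasB m σ (j1 + (r-1)*(d+1))) ∧
  (∀ j : Fin m, Sum.inr j ∈ σ → j.val ≤ j1 + (l-1)*(d+1) →
      ∃ r, 1 ≤ r ∧ r ≤ l ∧ (j.val = (r-1)*(d+1) ∨ j.val = j1 + (r-1)*(d+1))) ∧
  hasB m σ (m + j1 - (d+1)) ∧
  (∀ j : Fin m, Sum.inr j ∈ σ → j.val ≤ m + j1 - (d+1)) ∧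
  (∀ r, 1 ≤ r → r ≤ l → ∀ j : Fin m,
      (j.val = (r-1)*(d+1) ∨ j.val = j1 + (r-1)*(d+1)) → σ.erase (Sum.inr j) ∉ setM m d)


/-- survivors before stage `n` of phase two -/
def TT (m d n : ℕ) : Set (Finset (Fin m ⊕ Fin m)) := phase (setM m d) ((listB m).take n)

def blk (m d : ℕ) (σ : Finset (Fin m ⊕ Fin m)) (i : Fin m) : Prop :=
  ∃ j : Fin m, Sum.inr j ∈ σ ∧ (j.val + m - i.val) % m < d

def Dom (m d : ℕ) (X : ℕ → Prop) : Prop :=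
  ∀ i, i < m → ∃ n, X n ∧ n < m ∧ (i ≤ n ∧ n < i + d ∨ n + m < i + d)

lemma mem_stepSurv {α : Type*} [DecidableEq α] (x : α) (T : Set (Finset α)) (σ : Finset α) :
    σ ∈ stepSurv x T ↔ σ ∈ T ∧ ¬ (insert x σ ∈ T ∧ σ.erase x ∈ T) := by
  unfold stepSurv stepS
  constructor
  · rintro ⟨h, h2⟩
    refine ⟨h, fun ⟨h3, h4⟩ => h2 ?_⟩
    by_cases hx : x ∈ σ
    · right
      refine ⟨σ.erase x, ⟨h4, by simp, ?_⟩, Finset.insert_erase hx⟩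
      rw [Finset.insert_erase hx]; exact h
    · left
      exact ⟨h, hx, h3⟩
  · rintro ⟨h, h2⟩
    refine ⟨h, ?_⟩
    rintro (⟨_, hx, h3⟩ | ⟨τ, ⟨h3, hx, h4⟩, rfl⟩)
    · exact h2 ⟨h3, by rwa [Finset.erase_eq_of_notMem hx]⟩
    · exact h2 ⟨by simpa using h4, by rwa [Finset.erase_insert hx]⟩

lemma phase_succ {α : Type*} [DecidableEq α] (T : Set (Finset α)) (l : List α) (n : ℕ)
    (h : n < l.length) :
    phase T (l.take (n+1)) = stepSurv l[n] (phase T (l.take n)) := by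
  unfold phase
  rw [List.take_succ_eq_append_getElem h, List.foldl_append]
  rfl

lemma listA_get (m n : ℕ) (h : n < (listA m).length) (h' : n < m) :
    (listA m)[n] = Sum.inl ⟨n, h'⟩ := by
  simp [listA]

lemma listB_get (m n : ℕ) (h : n < (listB m).length) (h' : n < m) :
    (listB m)[n] = Sum.inr ⟨n, h'⟩ := by
  simp [listB]

lemma listA_len (m : ℕ) : (listA m).length = m := by simp [listA]
lemma listB_len (m : ℕ) : (listB m).length = m := by simp [listB]

lemma mem_faceP (m d : ℕ) (σ : Finset (Fin m ⊕ Fin m)) :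
    σ ∈ faceP m d ↔ ∀ i, Sum.inl i ∈ σ → ¬ blk m d σ i := by
  unfold faceP IsInd Gmd blk
  simp only [Set.mem_setOf_eq, SimpleGraph.fromRel_adj]
  constructor
  · rintro h i hi ⟨j, hj, hlt⟩
    exact h _ hi _ hj ⟨by simp, Or.inl ⟨i, j, rfl, rfl, hlt⟩⟩
  · rintro h u hu v hv ⟨_, ⟨i, j, rfl, rfl, hlt⟩ | ⟨i, j, rfl, rfl, hlt⟩⟩
    · exact h i hu ⟨j, hv, hlt⟩
    · exact h i hv ⟨j, hu, hlt⟩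

lemma blk_insert (m d : ℕ) (σ : Finset (Fin m ⊕ Fin m)) (i k : Fin m) :
    blk m d (insert (Sum.inl k) σ) i ↔ blk m d σ i := by
  simp [blk]

lemma blk_erase (m d : ℕ) (σ : Finset (Fin m ⊕ Fin m)) (i k : Fin m) :
    blk m d (σ.erase (Sum.inl k)) i ↔ blk m d σ i := by
  simp [blk]

lemma mem_phaseA (m d n : ℕ) (hn : n ≤ m) (σ : Finset (Fin m ⊕ Fin m)) :
    σ ∈ phase (faceP m d) ((listA m).take n) ↔
      σ ∈ faceP m d ∧ ∀ i : Fin m, i.val < n → blk m d σ i := by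
  induction n generalizing σ with
  | zero => simp [phase]
  | succ n ih =>
    have hl : n < (listA m).length := by rw [listA_len]; omega
    rw [phase_succ _ _ _ hl, listA_get m n hl (by omega), mem_stepSurv,
      ih (by omega), ih (by omega), ih (by omega)]
    simp only [mem_faceP, blk_insert, blk_erase, Finset.mem_insert, Finset.mem_erase]
    constructor
    · rintro ⟨⟨h1, h2⟩, h3⟩
      refine ⟨h1, fun i hi => ?_⟩
      by_cases hin : i.val = n
      · by_contra hb
        apply h3
        refine ⟨⟨?_, h2⟩, ⟨fun i hi => h1 i hi.2, h2⟩⟩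
        rintro i' (h | h)
        · have : i' = i := by
            have := Sum.inl.inj h
            ext; rw [this]; exact hin.symm
          rw [this]; exact hb
        · exact h1 i' h
      · exact h2 i (by omega)
    · rintro ⟨h1, h2⟩
      refine ⟨⟨h1, fun i hi => h2 i (by omega)⟩, ?_⟩
      rintro ⟨⟨h3, _⟩, _⟩
      exact h3 ⟨n, by omega⟩ (Or.inl rfl) (h2 _ (by simp))

lemma win_iff (m d i j : ℕ) (hi : i < m) (hj : j < m) (hdm : d ≤ m) :
    (j + m - i) % m < d ↔ (i ≤ j ∧ j < i + d ∨ j + m < i + d) := by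
  by_cases h : i ≤ j
  · have : j + m - i = (j - i) + m := by omega
    rw [this, Nat.add_mod_right, Nat.mod_eq_of_lt (by omega)]; omega
  · rw [Nat.mod_eq_of_lt (by omega)]; omega

lemma mem_setM (m d : ℕ) (hdm : d ≤ m) (σ : Finset (Fin m ⊕ Fin m)) :
    σ ∈ setM m d ↔ onlyB m σ ∧ Dom m d (hasB m σ) := by
  have h := mem_phaseA m d m le_rfl σ
  rw [List.take_of_length_le (by rw [listA_len])] at h
  unfold setM
  rw [h, mem_faceP]
  constructor
  · rintro ⟨h1, h2⟩
    refine ⟨?_, ?_⟩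
    · rintro (i | j) hv
      · exact absurd (h2 i i.2) (h1 i hv)
      · exact ⟨j, rfl⟩
    · intro i hi
      obtain ⟨j, hj, hlt⟩ := h2 ⟨i, hi⟩ hi
      exact ⟨j, ⟨j, rfl, hj⟩, j.2, (win_iff m d i j hi j.2 hdm).1 hlt⟩
  · rintro ⟨h1, h2⟩
    refine ⟨?_, ?_⟩
    · intro i hi
      obtain ⟨j, hj⟩ := h1 _ hi
      simp at hj
    · intro i hi
      obtain ⟨n, ⟨j, rfl, hj⟩, _, hw⟩ := h2 i hi
      exact ⟨j, hj, (win_iff m d i j hi j.2 hdm).2 hw⟩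

lemma TT_zero (m d : ℕ) : TT m d 0 = setM m d := by simp [TT, phase]

lemma mem_TT_succ (m d n : ℕ) (hn : n < m) (σ : Finset (Fin m ⊕ Fin m)) :
    σ ∈ TT m d (n+1) ↔ σ ∈ TT m d n ∧
      ¬ (insert (Sum.inr ⟨n, hn⟩) σ ∈ TT m d n ∧ σ.erase (Sum.inr ⟨n, hn⟩) ∈ TT m d n) := by
  have hl : n < (listB m).length := by rw [listB_len]; omega
  unfold TT
  rw [phase_succ _ _ _ hl, listB_get m n hl hn, mem_stepSurv]

lemma TT_anti (m d n n' : ℕ) (h : n ≤ n') (hn : n' ≤ m) : TT m d n' ⊆ TT m d n := by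
  induction n', h using Nat.le_induction with
  | base => exact subset_rfl
  | succ k hk ih =>
    intro σ hσ
    rw [mem_TT_succ m d k (by omega)] at hσ
    exact ih (by omega) hσ.1

lemma TT_sub (m d n : ℕ) (hn : n ≤ m) : TT m d n ⊆ setM m d := by
  rw [← TT_zero]; exact TT_anti m d 0 n (by omega) hn

lemma phase_diff {α : Type*} [DecidableEq α] (T : Set (Finset α)) (l : List α) (n : ℕ)
    (hn : n ≤ l.length) (σ : Finset α) :
    σ ∈ phase T (l.take n) ↔ σ ∈ T ∧ ∀ i (h : i < l.length), i < n →
      σ ∉ stepS l[i] (phase T (l.take i)) ∪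
        (insert l[i]) '' stepS l[i] (phase T (l.take i)) := by
  induction n with
  | zero => simp [phase]
  | succ n ih =>
    rw [phase_succ _ _ _ (by omega)]
    unfold stepSurv
    rw [Set.mem_diff, ih (by omega)]
    constructor
    · rintro ⟨⟨h1, h2⟩, h3⟩
      refine ⟨h1, fun i h hi => ?_⟩
      by_cases hin : i = n
      · subst hin; exact h3
      · exact h2 i h (by omega)
    · rintro ⟨h1, h2⟩
      exact ⟨⟨h1, fun i h hi => h2 i h (by omega)⟩, h2 n (by omega) (by omega)⟩

lemma mem_setC (m d : ℕ) (σ : Finset (Fin m ⊕ Fin m)) : σ ∈ setC m d ↔ σ ∈ TT m d m := by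
  have hA := phase_diff (faceP m d) (listA m) m (by rw [listA_len]) σ
  have hB := phase_diff (setM m d) (listB m) m (by rw [listB_len]) σ
  rw [List.take_of_length_le (by rw [listA_len])] at hA
  change σ ∈ setM m d ↔ _ at hA
  unfold TT
  rw [hB, hA]
  unfold setC scriptSa scriptSb Sa Sb
  simp only [Set.mem_diff, Set.mem_union, Set.mem_iUnion, not_or, not_exists, and_assoc]
  refine and_congr_right fun _ => and_congr ?_ ?_
  · constructor
    · intro h i hi him
      rw [listA_get m i hi him]
      exact h ⟨i, him⟩
    · intro h i
      have := h i (by rw [listA_len]; exact i.2) i.2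
      rw [listA_get m i _ i.2] at this
      exact this
  · constructor
    · intro h i hi him
      rw [listB_get m i hi him]
      exact h ⟨i, him⟩
    · intro h i
      have := h i (by rw [listB_len]; exact i.2) i.2
      rw [listB_get m i _ i.2] at this
      exact this

lemma hasB_insert (m : ℕ) (σ : Finset (Fin m ⊕ Fin m)) (j : Fin m) (n : ℕ) :
    hasB m (insert (Sum.inr j) σ) n ↔ n = j.val ∨ hasB m σ n := by
  unfold hasB
  constructor
  · rintro ⟨i, rfl, hi⟩
    rcases Finset.mem_insert.1 hi with h | h
    · left; rw [Sum.inr.inj h]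
    · right; exact ⟨i, rfl, h⟩
  · rintro (rfl | ⟨i, rfl, hi⟩)
    · exact ⟨j, rfl, by simp⟩
    · exact ⟨i, rfl, by simp [hi]⟩

lemma hasB_erase (m : ℕ) (σ : Finset (Fin m ⊕ Fin m)) (j : Fin m) (n : ℕ) :
    hasB m (σ.erase (Sum.inr j)) n ↔ n ≠ j.val ∧ hasB m σ n := by
  unfold hasB
  constructor
  · rintro ⟨i, rfl, hi⟩
    rw [Finset.mem_erase] at hi
    exact ⟨fun h => hi.1 (by rw [Fin.ext h]), i, rfl, hi.2⟩
  · rintro ⟨h, i, rfl, hi⟩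
    exact ⟨i, rfl, Finset.mem_erase.2 ⟨fun h' => h (by rw [Sum.inr.inj h']), hi⟩⟩

lemma hasB_iff (m : ℕ) (σ : Finset (Fin m ⊕ Fin m)) (j : Fin m) :
    hasB m σ j.val ↔ Sum.inr j ∈ σ := by
  unfold hasB
  constructor
  · rintro ⟨i, h, hi⟩; rwa [← Fin.ext h]
  · intro h; exact ⟨j, rfl, h⟩

lemma hasB_lt {m : ℕ} {σ : Finset (Fin m ⊕ Fin m)} {n : ℕ} (h : hasB m σ n) : n < m := by
  obtain ⟨j, rfl, _⟩ := h; exact j.2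

lemma onlyB_insert {m : ℕ} {σ : Finset (Fin m ⊕ Fin m)} (j : Fin m) (h : onlyB m σ) :
    onlyB m (insert (Sum.inr j) σ) := by
  intro v hv
  rcases Finset.mem_insert.1 hv with rfl | h'
  · exact ⟨j, rfl⟩
  · exact h v h'

lemma onlyB_erase {m : ℕ} {σ : Finset (Fin m ⊕ Fin m)} (j : Fin m) (h : onlyB m σ) :
    onlyB m (σ.erase (Sum.inr j)) := fun v hv => h v (Finset.mem_of_mem_erase hv)

lemma Dom_mono {m d : ℕ} {X Y : ℕ → Prop} (h : ∀ n, X n → Y n) (hX : Dom m d X) :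
    Dom m d Y := by
  intro i hi
  obtain ⟨n, h1, h2⟩ := hX i hi
  exact ⟨n, h n h1, h2⟩

/-- `setM` is upward closed among subsets of `B`. -/
lemma setM_mono {m d : ℕ} (hdm : d ≤ m) {σ τ : Finset (Fin m ⊕ Fin m)}
    (h : ∀ n, hasB m σ n → hasB m τ n) (hτ : onlyB m τ) (hσ : σ ∈ setM m d) : τ ∈ setM m d := by
  rw [mem_setM m d hdm] at hσ ⊢
  exact ⟨hτ, Dom_mono h hσ.2⟩

/-- exchange: removing `z` is harmless when its neighbours `p`, `y` are close -/
lemma Dom_exch {m d : ℕ} (hdm : d ≤ m) {X Y : ℕ → Prop} (hX : Dom m d X) (p z y : ℕ)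
    (hp : p < m) (hy : y < m)
    (hXY : ∀ n, X n → n ≠ z → Y n) (hYp : Y p) (hYy : Y y)
    (h : (p < z ∧ z < y ∧ y ≤ p + d) ∨ (z = 0 ∧ 0 < y ∧ y < p ∧ y + m ≤ p + d)) :
    Dom m d Y := by
  intro i hi
  obtain ⟨n, h1, h2, h3⟩ := hX i hi
  by_cases hn : n = z
  · subst hn
    by_cases hpw : i ≤ p ∧ p < i + d ∨ p + m < i + d
    · exact ⟨p, hYp, hp, hpw⟩
    · exact ⟨y, hYy, hy, by omega⟩
  · exact ⟨n, hXY n h1 hn, h2, h3⟩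

/-- adding `y` does not help filling the gap at `w` -/
lemma Dom_block {m d : ℕ} {X : ℕ → Prop} (hX : Dom m d X) (w z y k : ℕ)
    (hwz : w < z) (hzy : z < y) (hyk : y < k) (hk : k < m) (hz : X z) (hXk : X k)
    (h : Dom m d (fun n => n ≠ w ∧ (n = y ∨ X n))) : Dom m d (fun n => n ≠ w ∧ X n) := by
  intro i hi
  obtain ⟨n, ⟨h1, h1'⟩, h2, h3⟩ := h i hi
  by_cases hn : n = y
  · subst hn
    obtain ⟨n', h4, h5, h6⟩ := hX i hi
    by_cases hw : n' = w
    · subst hw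
      by_cases hzw : i ≤ z ∧ z < i + d ∨ z + m < i + d
      · exact ⟨z, ⟨by omega, hz⟩, by omega, hzw⟩
      · exact ⟨k, ⟨by omega, hXk⟩, hk, by omega⟩
    · exact ⟨n', ⟨hw, h4⟩, h5, h6⟩
  · exact ⟨n, ⟨h1, by tauto⟩, h2, h3⟩

lemma zpick (m d j1 k n y : ℕ) (hj1 : 1 ≤ j1) (hj1d : j1 ≤ d) (hm : d + 1 ≤ m)
    (hk : k = m + j1 - (d + 1)) (hyn : y < n) (hnk : n ≤ k)
    (X : ℕ → Prop) (hXk : X k) (hX : ∀ y, y < n → (X y ↔ (y % (d+1) = 0 ∨ y % (d+1) = j1)))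
    (hy : ¬ X y) :
    ∃ z p, z < y ∧ X z ∧ X p ∧ p < m ∧
      ((p < z ∧ z < y ∧ y ≤ p + d) ∨ (z = 0 ∧ 0 < y ∧ y < p ∧ y + m ≤ p + d)) := by
  rw [hX y hyn] at hy
  obtain ⟨hq0, hq1⟩ := not_or.1 hy
  have hdiv := Nat.div_add_mod y (d+1)
  have hqlt := Nat.mod_lt y (Nat.succ_pos d)
  set q := y % (d+1) with hq
  set r := y / (d+1) with hr
  have e0 : ((d+1)*r) % (d+1) = 0 := Nat.mul_mod_right _ _
  have e1 : ((d+1)*r + j1) % (d+1) = j1 := by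
    rw [Nat.mul_add_mod, Nat.mod_eq_of_lt (by omega)]
  by_cases h : q < j1
  · rcases Nat.eq_zero_or_pos r with h0 | h0
    · rw [h0] at e0 hdiv
      refine ⟨0, k, by omega, (hX 0 (by omega)).2 (by simp), hXk, by omega, Or.inr ?_⟩
      simp at hdiv
      omega
    · obtain ⟨r', hr'⟩ : ∃ r', r = r' + 1 := ⟨r - 1, by omega⟩
      have e2 : ((d+1)*r' + j1) % (d+1) = j1 := by
        rw [Nat.mul_add_mod, Nat.mod_eq_of_lt (by omega)]
      have e3 : (d+1)*r = (d+1)*r' + (d+1) := by rw [hr']; ring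
      refine ⟨(d+1)*r, (d+1)*r' + j1, by omega, (hX _ (by omega)).2 (Or.inl e0),
        (hX _ (by omega)).2 (Or.inr e2), by omega, Or.inl ?_⟩
      omega
  · refine ⟨(d+1)*r + j1, (d+1)*r, by omega, (hX _ (by omega)).2 (Or.inr e1),
        (hX _ (by omega)).2 (Or.inl e0), by omega, Or.inl ?_⟩
    omega

lemma surv (m d j1 k : ℕ) (hdm : d ≤ m) (hj1 : 1 ≤ j1) (hj1d : j1 ≤ d) (hm : d + 1 ≤ m)
    (hk : k = m + j1 - (d + 1)) : ∀ n, n ≤ k → ∀ ρ : Finset (Fin m ⊕ Fin m),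
    ρ ∈ setM m d → hasB m ρ k →
    (∀ y, y < n → (hasB m ρ y ↔ (y % (d+1) = 0 ∨ y % (d+1) = j1))) →
    (∀ w : Fin m, w.val < n → hasB m ρ w.val → ρ.erase (Sum.inr w) ∉ setM m d) →
    ρ ∈ TT m d n := by
  intro n
  induction n using Nat.strong_induction_on with
  | _ n ih =>
  intro hnk ρ hρ hρk hpre hcrit
  rcases Nat.eq_zero_or_pos n with h0 | h0
  · subst h0; rw [TT_zero]; exact hρ
  obtain ⟨y, rfl⟩ : ∃ y, n = y + 1 := ⟨n - 1, by omega⟩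
  have hym : y < m := by omega
  rw [mem_TT_succ m d y hym]
  refine ⟨ih y (by omega) (by omega) ρ hρ hρk (fun y' h => hpre y' (by omega))
    (fun w h => hcrit w (by omega)), ?_⟩
  rintro ⟨h1, h2⟩
  by_cases hy : hasB m ρ y
  · exact hcrit ⟨y, hym⟩ (by simp) hy (TT_sub m d y (by omega) h2)
  · obtain ⟨z, p, hzy, hz, hp, hpm, hloc⟩ := zpick m d j1 k (y+1) y hj1 hj1d hm hk (by omega) hnk
      (hasB m ρ) hρk hpre hy
    have hρ' := (mem_setM m d hdm ρ).1 hρ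
    have hzm : z < m := by omega
    set ρ' := insert (Sum.inr ⟨y, hym⟩) ρ with hρ'def
    have hB' : ∀ n, hasB m ρ' n ↔ n = y ∨ hasB m ρ n := fun n => hasB_insert m ρ ⟨y, hym⟩ n
    have hB'' : ∀ n, hasB m (ρ'.erase (Sum.inr ⟨z, hzm⟩)) n ↔ n ≠ z ∧ (n = y ∨ hasB m ρ n) := by
      intro n; rw [hasB_erase, hB']
    have key : ρ'.erase (Sum.inr ⟨z, hzm⟩) ∈ TT m d z := by
      apply ih z (by omega) (by omega)
      · rw [mem_setM m d hdm]
        refine ⟨onlyB_erase _ (onlyB_insert _ hρ'.1), ?_⟩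
        refine Dom_exch hdm hρ'.2 p z y hpm hym ?_ ?_ ?_ hloc
        · intro n hn hnz; rw [hB'']; exact ⟨hnz, Or.inr hn⟩
        · rw [hB'']; exact ⟨by omega, Or.inr hp⟩
        · rw [hB'']; exact ⟨by omega, Or.inl rfl⟩
      · rw [hB'']; exact ⟨by omega, Or.inr hρk⟩
      · intro y' hy'
        rw [hB'', ← hpre y' (by omega)]
        constructor
        · rintro ⟨_, h | h⟩
          · omega
          · exact h
        · intro h; exact ⟨by omega, Or.inr h⟩
      · intro w hw hwB hbad
        rw [hB''] at hwB
        have hwB' : hasB m ρ w.val := by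
          rcases hwB.2 with h | h
          · omega
          · exact h
        apply hcrit w (by omega) hwB'
        rw [mem_setM m d hdm] at hbad ⊢
        refine ⟨onlyB_erase _ hρ'.1, ?_⟩
        have := Dom_block hρ'.2 w.val z y k hw hzy (by omega) (by omega) hz hρk ?_
        · refine Dom_mono ?_ this
          intro n hn; rw [hasB_erase]; exact hn
        · refine Dom_mono ?_ hbad.2
          intro n hn
          rw [hasB_erase, hB''] at hn
          exact ⟨hn.1, hn.2.2⟩
    have h3 : ρ' ∈ TT m d (z+1) := TT_anti m d (z+1) y (by omega) (by omega) h1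
    rw [mem_TT_succ m d z hzm] at h3
    refine h3.2 ⟨?_, key⟩
    rw [Finset.insert_eq_self.2]
    · exact h3.1
    · rw [← hasB_iff, hB']; exact Or.inr hz

/-- cells matched through the first vertex do not survive -/
lemma rem0 (m d n : ℕ) (hn : 1 ≤ n) (hnm : n ≤ m) (τ : Finset (Fin m ⊕ Fin m))
    (h0 : hasB m τ 0) (h : τ.erase (Sum.inr ⟨0, by omega⟩) ∈ setM m d) : τ ∉ TT m d n := by
  intro hτ
  have h1 := TT_anti m d 1 n hn hnm hτ
  rw [mem_TT_succ m d 0 (by omega), TT_zero] at h1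
  refine h1.2 ⟨?_, h⟩
  rw [Finset.insert_eq_self.2]
  · exact h1.1
  · rw [← hasB_iff]; exact h0

lemma finish (m d j1 k : ℕ) (hdm : d ≤ m) (hj1 : 1 ≤ j1) (hj1d : j1 ≤ d) (hm : d + 1 ≤ m)
    (hk : k = m + j1 - (d + 1)) (σ : Finset (Fin m ⊕ Fin m)) (hσ : σ ∈ setM m d)
    (h0 : hasB m σ 0) (hj : hasB m σ j1) (hmax : ∀ n, hasB m σ n → n ≤ k)
    (hs : σ ∈ TT m d (k+1)) : σ ∈ TT m d m := by
  have hσ' := (mem_setM m d hdm σ).1 hσ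
  have : ∀ n, k + 1 ≤ n → n ≤ m → σ ∈ TT m d n := by
    intro n hn
    induction n, hn using Nat.le_induction with
    | base => intro _; exact hs
    | succ y hy ih =>
      intro hym
      rw [mem_TT_succ m d y (by omega)]
      refine ⟨ih (by omega), ?_⟩
      rintro ⟨h1, _⟩
      refine rem0 m d y (by omega) (by omega) _ ?_ ?_ h1
      · rw [hasB_insert]; exact Or.inr h0
      · rw [mem_setM m d hdm]
        refine ⟨onlyB_erase _ (onlyB_insert _ hσ'.1), ?_⟩
        intro i hi
        obtain ⟨n, h2, h3, h4⟩ := hσ'.2 i hi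
        simp only [hasB_erase, hasB_insert]
        have := hasB_lt hj
        by_cases hn : n = 0
        · by_cases hw : i ≤ j1 ∧ j1 < i + d ∨ j1 + m < i + d
          · exact ⟨j1, ⟨by omega, Or.inr hj⟩, by omega, hw⟩
          · exact ⟨y, ⟨by omega, Or.inl rfl⟩, by omega, by omega⟩
        · exact ⟨n, ⟨hn, Or.inr h2⟩, h3, h4⟩
  exact this m (by omega) le_rfl

lemma lowSurv (m d n : ℕ) (hnm : n ≤ m) (hm : 0 < m) (τ : Finset (Fin m ⊕ Fin m))
    (hτ : τ ∈ setM m d)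
    (h0 : hasB m τ 0) (he : τ.erase (Sum.inr ⟨0, hm⟩) ∉ setM m d)
    (h : ∀ y : Fin m, 0 < y.val → y.val < n →
      (insert (Sum.inr y) τ).erase (Sum.inr ⟨0, hm⟩) ∈ setM m d) : τ ∈ TT m d n := by
  induction n with
  | zero => rw [TT_zero]; exact hτ
  | succ y ih =>
    rw [mem_TT_succ m d y (by omega)]
    refine ⟨ih (by omega) (fun y' h1 h2 => h y' h1 (by omega)), ?_⟩
    rintro ⟨h1, h2⟩
    rcases Nat.eq_zero_or_pos y with rfl | hy
    · rw [TT_zero] at h2; exact he h2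
    · refine rem0 m d y hy (by omega) _ ?_ (h ⟨y, by omega⟩ hy (by simp)) h1
      rw [hasB_insert]; exact Or.inr h0

/-- 0-based indices: write `m = t(d+1) + a` with `t ≥ 1`, `0 ≤ a ≤ d`, and let
`σ` satisfy property `P_t` (with parameter `j1`; 0-based subscripts `i_r = (r-1)(d+1)`,
`j_r = j1 + (r-1)(d+1)`, `k = m + j1 - (d+1)`).  Then `σ` is a critical cell iff either
`j_t = k`, or `k = i_{t+1} = t(d+1)` and
`σ = {b_{i_1}, b_{j_1}, b_{i_2}, b_{j_2}, …, b_{i_t}, b_{j_t}, b_{i_{t+1}}}`. -/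
theorem stmt13 (m d t a j1 : ℕ) (hd : 1 ≤ d) (hdm : d ≤ m)
    (ht : 1 ≤ t) (ha : a ≤ d) (hm : m = t * (d + 1) + a)
    (σ : Finset (Fin m ⊕ Fin m)) (hP : propP m d t j1 σ) :
    σ ∈ setC m d ↔
      (j1 + (t - 1) * (d + 1) = m + j1 - (d + 1) ∨
       (m + j1 - (d + 1) = t * (d + 1) ∧
        ∀ j : Fin m, Sum.inr j ∈ σ ↔
          ((∃ r, r ≤ t ∧ j.val = r * (d + 1)) ∨
           (∃ r, r < t ∧ j.val = j1 + r * (d + 1))))) := by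
  obtain ⟨hσM, hB, hj1, hj1d, hin, hsmall, hhk, hmax', hcr⟩ := hP
  obtain ⟨s, rfl⟩ : ∃ s, t = s + 1 := ⟨t - 1, by omega⟩
  simp only [Nat.add_sub_cancel] at hsmall ⊢
  have htD : (s + 1) * (d + 1) = s * (d + 1) + (d + 1) := by ring
  rw [htD] at hm ⊢
  obtain ⟨k, hk⟩ : ∃ k, k = m + j1 - (d + 1) := ⟨_, rfl⟩
  rw [← hk] at hhk hmax' ⊢
  obtain ⟨N, hN⟩ : ∃ N, N = s * (d + 1) := ⟨_, rfl⟩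
  rw [← hN] at hsmall htD hm ⊢
  have hσ' := (mem_setM m d hdm σ).1 hσM
  have hmax : ∀ n, hasB m σ n → n ≤ k := by
    rintro n ⟨j, rfl, hj⟩; exact hmax' j hj
  have hin' : ∀ r, r ≤ s → hasB m σ (r * (d+1)) ∧ hasB m σ (j1 + r * (d+1)) := by
    intro r hr; have := hin (r+1) (by omega) (by omega); simpa using this
  have h0 : hasB m σ 0 := by have := (hin' 0 (by omega)).1; simpa using this
  have hJ1 : hasB m σ j1 := by have := (hin' 0 (by omega)).2; simpa using this
  have hiN : hasB m σ N := by rw [hN]; exact (hin' s le_rfl).1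
  have hjN : hasB m σ (j1 + N) := by rw [hN]; exact (hin' s le_rfl).2
  have hsm : ∀ n, hasB m σ n → n ≤ j1 + N → ∃ r, r ≤ s ∧
      (n = r * (d+1) ∨ n = j1 + r * (d+1)) := by
    rintro n ⟨j, rfl, hj⟩ hle
    obtain ⟨r, h1, h2, h3⟩ := hsmall j hj hle
    exact ⟨r - 1, by omega, h3⟩
  have hcrit : ∀ w : Fin m, w.val ≤ j1 + N → hasB m σ w.val →
      σ.erase (Sum.inr w) ∉ setM m d := by
    intro w hw hwB
    obtain ⟨r, h1, h2⟩ := hsm _ hwB hw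
    exact hcr (r+1) (by omega) (by omega) w (by simpa using h2)
  have hmodN : ∀ y, y < N + (d + 1) → ((y % (d+1) = 0 ∨ y % (d+1) = j1) →
      hasB m σ y) := by
    intro y hy hq
    have hdiv := Nat.div_add_mod y (d+1)
    have hr : y / (d+1) ≤ s := by
      have : y / (d+1) < s + 1 := by
        rw [Nat.div_lt_iff_lt_mul (by omega), htD]; exact hy
      omega
    have := hin' _ hr
    rw [Nat.mul_comm] at hdiv
    rcases hq with h | h
    · rw [h] at hdiv; rw [← hdiv]; exact this.1
    · rw [h, Nat.add_comm] at hdiv; rw [← hdiv]; exact this.2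
  have hpre0 : ∀ y, y < j1 + N + 1 → (hasB m σ y ↔ (y % (d+1) = 0 ∨ y % (d+1) = j1)) := by
    intro y hy
    refine ⟨fun h => ?_, hmodN y (by omega)⟩
    obtain ⟨r, h1, h2 | h2⟩ := hsm y h (by omega)
    · left; rw [h2]; exact Nat.mul_mod_left _ _
    · right; rw [h2, Nat.add_mul_mod_self_right, Nat.mod_eq_of_lt (by omega)]
  have hnone : ∀ y, hasB m σ y → j1 + N < y → N + (d + 1) ≤ y := by
    intro y hy h1
    by_contra h2
    have hjm := hasB_lt hjN
    refine hcrit ⟨j1 + N, hjm⟩ (by simp) hjN ?_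
    rw [mem_setM m d hdm]
    refine ⟨onlyB_erase _ hB, ?_⟩
    refine Dom_exch hdm hσ'.2 N (j1 + N) y (by omega) (hasB_lt hy) ?_ ?_ ?_ (Or.inl (by omega))
    · intro n hn hne; rw [hasB_erase]; exact ⟨hne, hn⟩
    · rw [hasB_erase]; exact ⟨by simp; omega, hiN⟩
    · rw [hasB_erase]; exact ⟨by simp; omega, hy⟩
  have hpre : ∀ y, y < N + (d + 1) → (hasB m σ y ↔ (y % (d+1) = 0 ∨ y % (d+1) = j1)) := by
    intro y hy
    refine ⟨fun h => ?_, hmodN y hy⟩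
    apply (hpre0 y _).1 h
    by_contra h1
    have := hnone y h (by omega)
    omega
  have hm1 : d + 1 ≤ m := by omega
  rw [mem_setC]
  by_cases ha0 : a = 0
  · -- first case
    have hkN : k = j1 + N := by omega
    refine iff_of_true ?_ (Or.inl hkN.symm)
    apply finish m d j1 k hdm hj1 hj1d hm1 hk σ hσM h0 hJ1 hmax
    rw [mem_TT_succ m d k (by omega)]
    refine ⟨surv m d j1 k hdm hj1 hj1d hm1 hk k le_rfl σ hσM hhk
      (fun y hy => hpre y (by omega)) (fun w hw => hcrit w (by omega)), ?_⟩
    rintro ⟨_, h2⟩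
    exact hcrit ⟨k, by omega⟩ (by simp; omega) hhk (TT_sub m d k (by omega) h2)
  have haj : N + (d + 1) ≤ k := hnone k hhk (by omega)
  by_cases hkx : k = N + (d + 1)
  · -- second case
    refine iff_of_true ?_ (Or.inr ⟨hkx, ?_⟩)
    · apply finish m d j1 k hdm hj1 hj1d hm1 hk σ hσM h0 hJ1 hmax
      have hkm : k < m := by omega
      have hlow : ∀ n, hasB m σ n → n < k → n ≤ j1 + N := by
        intro n hn hnk; by_contra hc
        have := hnone n hn (by omega)
        omega
      rw [mem_TT_succ m d k hkm]
      refine ⟨surv m d j1 k hdm hj1 hj1d hm1 hk k le_rfl σ hσM hhk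
        (fun y hy => hpre y (by omega))
        (fun w hw hwB => hcrit w (hlow _ hwB hw) hwB), ?_⟩
      rintro ⟨_, h2⟩
      set ρ := σ.erase (Sum.inr ⟨k, hkm⟩) with hρ
      have hBρ : ∀ n, hasB m ρ n ↔ n ≠ k ∧ hasB m σ n := fun n => hasB_erase m σ ⟨k, hkm⟩ n
      have hρM := TT_sub m d k (by omega) h2
      have hρM' := (mem_setM m d hdm ρ).1 hρM
      have hgap : m ≤ j1 + N + d := by
        obtain ⟨n, h3, h4, h5⟩ := hρM'.2 (j1 + N + 1) (by omega)
        rw [hBρ] at h3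
        have := hmax n h3.2
        have := hlow n h3.2 (by omega)
        omega
      obtain ⟨y, hy⟩ : ∃ y, y = j1 - a := ⟨_, rfl⟩
      have hym : y < m := by omega
      have hρ0 : hasB m ρ 0 := by rw [hBρ]; exact ⟨by omega, h0⟩
      have hρj : hasB m ρ (j1 + N) := by rw [hBρ]; exact ⟨by omega, hjN⟩
      have hm0 : 0 < m := by omega
      -- common part
      have common : ∀ τ : Finset (Fin m ⊕ Fin m), τ ∈ setM m d →
          (∀ n, hasB m ρ n → hasB m τ n) →
          τ.erase (Sum.inr ⟨0, hm0⟩) ∉ setM m d → τ ∈ TT m d y := by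
        intro τ hτ hsub he
        refine lowSurv m d y (by omega) hm0 τ hτ (hsub _ hρ0) he ?_
        intro y' h3 h4
        have hτ' := (mem_setM m d hdm τ).1 hτ
        rw [mem_setM m d hdm]
        refine ⟨onlyB_erase _ (onlyB_insert _ hτ'.1), ?_⟩
        refine Dom_exch hdm hτ'.2 (j1 + N) 0 y' (by omega) y'.2 ?_ ?_ ?_ (Or.inr (by omega))
        · intro n hn hne; rw [hasB_erase, hasB_insert]; exact ⟨hne, Or.inr hn⟩
        · rw [hasB_erase, hasB_insert]; exact ⟨by simp; omega, Or.inr (hsub _ hρj)⟩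
        · rw [hasB_erase, hasB_insert]; exact ⟨by simp; omega, Or.inl rfl⟩
      have hT1 : ρ ∈ TT m d y := by
        refine common ρ hρM (fun n h => h) ?_
        intro hbad
        refine hcrit ⟨0, hm0⟩ (by simp) h0 (setM_mono hdm ?_ (onlyB_erase _ hB) hbad)
        intro n hn
        rw [hasB_erase, hBρ] at hn
        rw [hasB_erase]; exact ⟨hn.1, hn.2.2⟩
      have hT2 : insert (Sum.inr ⟨y, hym⟩) ρ ∈ TT m d y := by
        have hsub : ∀ n, hasB m ρ n → hasB m (insert (Sum.inr ⟨y, hym⟩) ρ) n := by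
          intro n hn; rw [hasB_insert]; exact Or.inr hn
        refine common _ (setM_mono hdm hsub (onlyB_insert _ hρM'.1) hρM) hsub ?_
        intro hbad
        obtain ⟨n, h3, h4, h5⟩ := ((mem_setM m d hdm _).1 hbad).2 (j1 + N + 1) (by omega)
        rw [hasB_erase, hasB_insert, hBρ] at h3
        simp only at h3
        obtain ⟨h6, h7 | ⟨h7, h8⟩⟩ := h3
        · omega
        · have := hmax n h8
          have := hlow n h8 (by omega)
          have h9 := (hpre n (by omega)).1 h8
          rw [Nat.mod_eq_of_lt (by omega)] at h9
          omega
      have h3 : ρ ∈ TT m d (y+1) := TT_anti m d (y+1) k (by omega) (by omega) h2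
      rw [mem_TT_succ m d y hym] at h3
      refine h3.2 ⟨hT2, ?_⟩
      rw [Finset.erase_eq_of_notMem]
      · exact hT1
      · rw [← hasB_iff, hBρ]
        rintro ⟨_, h8⟩
        have h9 := (hpre y (by omega)).1 h8
        rw [Nat.mod_eq_of_lt (by omega)] at h9
        omega
    · intro j
      rw [← hasB_iff]
      constructor
      · intro hj
        by_cases hjk : j.val = k
        · exact Or.inl ⟨s+1, le_rfl, by omega⟩
        · have := hmax _ hj
          have hle : j.val ≤ j1 + N := by
            by_contra hc
            have := hnone _ hj (by omega)
            omega
          obtain ⟨r, h1, h2 | h2⟩ := hsm _ hj hle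
          · exact Or.inl ⟨r, by omega, h2⟩
          · exact Or.inr ⟨r, by omega, h2⟩
      · rintro (⟨r, h1, h2⟩ | ⟨r, h1, h2⟩)
        · by_cases hr : r ≤ s
          · rw [h2]; exact (hin' r hr).1
          · have : r = s + 1 := by omega
            subst this
            rw [h2, htD, ← hkx]; exact hhk
        · rw [h2]; exact (hin' r (by omega)).2
  · -- third case
    refine iff_of_false ?_ ?_
    · obtain ⟨x, hx⟩ : ∃ x, x = N + (d + 1) := ⟨_, rfl⟩
      have hxm : x < m := by omega
      intro hC
      have hC1 := TT_anti m d (x+1) m (by omega) le_rfl hC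
      rw [mem_TT_succ m d x hxm] at hC1
      apply hC1.2
      have hjm := hasB_lt hjN
      constructor
      · refine surv m d j1 k hdm hj1 hj1d hm1 hk x (by omega) _
          (setM_mono hdm (fun n hn => ?_) (onlyB_insert _ hB) hσM) ?_ ?_ ?_
        · rw [hasB_insert]; exact Or.inr hn
        · rw [hasB_insert]; exact Or.inr hhk
        · intro y hy
          rw [hasB_insert, ← hpre y (by omega)]
          simp only
          constructor
          · rintro (h | h)
            · omega
            · exact h
          · exact Or.inr
        · intro w hw hwB hbad
          rw [hasB_insert] at hwB
          simp only at hwB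
          have hwB' : hasB m σ w.val := by
            rcases hwB with h | h
            · omega
            · exact h
          have hwle : w.val ≤ j1 + N := by
            by_contra hc
            have := hnone _ hwB' (by omega)
            omega
          have hbad' := ((mem_setM m d hdm _).1 hbad).2
          by_cases hwj : w.val = j1 + N
          · obtain ⟨n, h3, h4, h5⟩ := hbad' (N + 1) (by omega)
            rw [hasB_erase, hasB_insert] at h3
            simp only at h3
            obtain ⟨h6, h7 | h8⟩ := h3
            · omega
            · by_cases hc : j1 + N < n
              · have := hnone n h8 hc
                omega
              · by_cases hc2 : N + 1 ≤ n
                · have h9 := (hpre n (by omega)).1 h8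
                  have h10 : n % (d+1) = n - N := by
                    have : n = (n - N) + s * (d+1) := by omega
                    rw [this, Nat.add_mul_mod_self_right, Nat.mod_eq_of_lt (by omega)]
                    omega
                  omega
                · omega
          · apply hcrit w hwle hwB'
            rw [mem_setM m d hdm]
            refine ⟨onlyB_erase _ hB, ?_⟩
            have := Dom_block hσ'.2 w.val (j1 + N) x k (by omega) (by omega) (by omega) (by omega)
              hjN hhk ?_
            · refine Dom_mono ?_ this
              intro n hn; rw [hasB_erase]; exact hn
            · refine Dom_mono ?_ hbad'
              intro n hn
              rw [hasB_erase, hasB_insert] at hn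
              exact hn
      · have hBe : ∀ n, hasB m (σ.erase (Sum.inr ⟨x, hxm⟩)) n ↔ n ≠ x ∧ hasB m σ n :=
          fun n => hasB_erase m σ ⟨x, hxm⟩ n
        refine surv m d j1 k hdm hj1 hj1d hm1 hk x (by omega) _ ?_ ?_ ?_ ?_
        · rw [mem_setM m d hdm]
          refine ⟨onlyB_erase _ hB, ?_⟩
          refine Dom_exch hdm hσ'.2 (j1 + N) x k (by omega) (by omega) ?_ ?_ ?_ (Or.inl (by omega))
          · intro n hn hne; rw [hBe]; exact ⟨hne, hn⟩
          · rw [hBe]; exact ⟨by omega, hjN⟩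
          · rw [hBe]; exact ⟨by omega, hhk⟩
        · rw [hBe]; exact ⟨by omega, hhk⟩
        · intro y hy
          rw [hBe, ← hpre y (by omega)]
          exact ⟨fun h => h.2, fun h => ⟨by omega, h⟩⟩
        · intro w hw hwB hbad
          rw [hBe] at hwB
          have hwle : w.val ≤ j1 + N := by
            by_contra hc
            have := hnone _ hwB.2 (by omega)
            omega
          refine hcrit w hwle hwB.2 (setM_mono hdm ?_ (onlyB_erase _ hB) hbad)
          intro n hn
          rw [hasB_erase, hBe] at hn
          rw [hasB_erase]; exact ⟨hn.1, hn.2.2⟩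
    · rintro (h | ⟨h, _⟩) <;> omega
end

section
/- Suppose m = t(d+1) with t ≥ 1 (i.e., α = 0). Then the critical cells of the matching μ on the face poset of Ind(G_m^d) are exactly the d sets {b_1, b_{j_1}, b_{i_2}, b_{j_2}, …, b_{i_t}, b_{j_t}} for j_1 ∈ {2,…,d+1}, where i_r = 1 + (r−1)(d+1) and j_r = j_1 + (r−1)(d+1); in particular there are exactly d critical cells, each of cardinality 2t. -/
open Finset

namespace Crit

/-- The residue pattern. -/
def pat (d j x : ℕ) : Prop := ∃ r, x = r * (d + 1) ∨ x = j + r * (d + 1)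

/-- Every cyclic window of length `d` is hit. -/
def Mp (m d : ℕ) (h : ℕ → Prop) : Prop :=
  ∀ k, k < m → ∃ x, h x ∧ ((k ≤ x ∧ x < k + d) ∨ x + m < k + d)

/-- Invariant with fixed `j`. -/
def InvJ (m d i j : ℕ) (h : ℕ → Prop) : Prop :=
  1 ≤ j ∧ j ≤ d ∧ h (m - d - 1 + j) ∧ (∀ x, h x → x ≤ m - d - 1 + j) ∧
    ∀ x, x ≤ m - d - 1 + j → (∀ y, i ≤ y → y ≤ x → ¬ pat d j y) → (h x ↔ pat d j x)

lemma lt_of_mul {a b D : ℕ} (h : a * D < b * D) : a < b := Nat.lt_of_mul_lt_mul_right h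

lemma pat_zero (d j : ℕ) : pat d j 0 := ⟨0, by simp⟩
lemma pat_j (d j : ℕ) : pat d j j := ⟨0, by simp⟩

/-- pattern in first block -/
lemma pat_small {d j x : ℕ} (hx : x ≤ d) (hp : pat d j x) : x = 0 ∨ x = j := by
  obtain ⟨r, hr⟩ := hp
  rcases Nat.eq_zero_or_pos r with h0 | h0
  · subst h0; simpa using hr
  · have : d + 1 ≤ r * (d + 1) := Nat.le_mul_of_pos_left _ h0
    omega

lemma pat_nbr {d j x : ℕ} (hj : 1 ≤ j) (hjd : j ≤ d) (hx : 1 ≤ x) (hp : pat d j x) :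
    ∃ p n, p < x ∧ x < n ∧ n = p + d + 1 ∧ pat d j p ∧ pat d j n ∧
      ∀ y, p < y → y < n → pat d j y → y = x := by
  obtain ⟨r, hr | hr⟩ := hp
  · rcases r with _ | r
    · omega
    have e : (r + 1) * (d + 1) = r * (d + 1) + (d + 1) := by ring
    refine ⟨j + r * (d + 1), j + (r + 1) * (d + 1), by omega, by omega, by omega,
      ⟨r, Or.inr rfl⟩, ⟨r + 1, Or.inr rfl⟩, ?_⟩
    rintro y h1 h2 ⟨s, hs | hs⟩
    · have a1 : r < s := lt_of_mul (D := d + 1) (by omega)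
      have a2 : s < r + 2 := lt_of_mul (D := d + 1) (by
        have : (r + 2) * (d + 1) = r * (d + 1) + (d + 1) + (d + 1) := by ring
        omega)
      have : s = r + 1 := by omega
      subst this; omega
    · have a1 : r < s := lt_of_mul (D := d + 1) (by omega)
      have a2 : s < r + 1 := lt_of_mul (D := d + 1) (by omega)
      omega
  · have e : (r + 1) * (d + 1) = r * (d + 1) + (d + 1) := by ring
    refine ⟨r * (d + 1), (r + 1) * (d + 1), by omega, by omega, by omega,
      ⟨r, Or.inl rfl⟩, ⟨r + 1, Or.inl rfl⟩, ?_⟩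
    rintro y h1 h2 ⟨s, hs | hs⟩
    · have a1 : r < s := lt_of_mul (D := d + 1) (by omega)
      have a2 : s < r + 1 := lt_of_mul (D := d + 1) (by omega)
      omega
    · have a1 : r < s + 1 := lt_of_mul (D := d + 1) (by
        have : (s + 1) * (d + 1) = s * (d + 1) + (d + 1) := by ring
        omega)
      have a2 : s < r + 1 := lt_of_mul (D := d + 1) (by omega)
      have : s = r := by omega
      subst this; omega

lemma Mp_mono {m d : ℕ} {h h' : ℕ → Prop} (hh : ∀ x, h x → h' x) (H : Mp m d h) : Mp m d h' := by
  intro k hk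
  obtain ⟨x, hx, hx'⟩ := H k hk
  exact ⟨x, hh x hx, hx'⟩

/-- base case -/
lemma base {m d : ℕ} (hd : 1 ≤ d) (hdm : d + 1 ≤ m) {h : ℕ → Prop} (hb : ∀ x, h x → x < m)
    (hM : Mp m d h) (h0 : h 0) (hE : ¬ Mp m d (fun x => x ≠ 0 ∧ h x)) : ∃ j, InvJ m d 1 j h := by
  classical
  obtain ⟨x0, hx0, hx0'⟩ := hM (m - d) (by omega)
  have hge : m - d ≤ x0 := by omega
  obtain ⟨L, hL, hLmax⟩ : ∃ L, h L ∧ ∀ x, h x → x ≤ L := by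
    refine ⟨Nat.findGreatest h m, Nat.findGreatest_spec (hb x0 hx0).le hx0, ?_⟩
    intro x hx
    exact Nat.le_findGreatest (hb x hx).le hx
  have h1 := hLmax x0 hx0
  have h2 := hb L hL
  have hLe : m - d - 1 + (L - (m - d - 1)) = L := by omega
  refine ⟨L - (m - d - 1), by omega, by omega, by rwa [hLe], by rwa [hLe], ?_⟩
  rw [hLe]
  intro x hxL hQ
  rcases Nat.eq_zero_or_pos x with hx | hx
  · subst hx; exact ⟨fun _ => pat_zero _ _, fun _ => h0⟩
  have hnp : ¬ pat d (L - (m - d - 1)) x := hQ x hx le_rfl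
  have hxj : x < L - (m - d - 1) := by
    by_contra hc
    exact hQ (L - (m - d - 1)) (by omega) (by omega) (pat_j _ _)
  refine ⟨fun hh => ?_, fun hh => absurd hh hnp⟩
  exfalso
  apply hE
  intro k hk
  by_cases hkd : k + d ≤ m
  · obtain ⟨z, hz, hz'⟩ := hM k hk
    by_cases hz0 : z = 0
    · exact ⟨x, ⟨by omega, hh⟩, by omega⟩
    · exact ⟨z, ⟨hz0, hz⟩, by omega⟩
  · by_cases hkL : k ≤ L
    · exact ⟨L, ⟨by omega, hL⟩, by omega⟩
    · exact ⟨x, ⟨by omega, hh⟩, by omega⟩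

lemma base' {m d j : ℕ} (hdm : d + 1 ≤ m) {h : ℕ → Prop}
    (hI : InvJ m d 1 j h) : h 0 ∧ ¬ Mp m d (fun x => x ≠ 0 ∧ h x) := by
  obtain ⟨hj, hjd, hL, hmax, hpat⟩ := hI
  refine ⟨(hpat 0 (by omega) (by intro y; omega)).2 (pat_zero _ _), fun hM => ?_⟩
  have key : ∀ x, x ≠ 0 → h x → j ≤ x := by
    intro x hx0 hx
    by_contra hc
    have hnp : ∀ y, 1 ≤ y → y ≤ x → ¬ pat d j y := by
      intro y h1 h2 hp
      have := pat_small (by omega) hp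
      omega
    exact hnp x (by omega) le_rfl ((hpat x (by omega) hnp).1 hx)
  by_cases hjd' : j = d
  · obtain ⟨x, ⟨hx0, hx⟩, hx'⟩ := hM 0 (by omega)
    have := key x hx0 hx
    omega
  · obtain ⟨x, ⟨hx0, hx⟩, hx'⟩ := hM (m - d - 1 + j + 1) (by omega)
    have := key x hx0 hx
    have := hmax x hx
    omega

/-- survival implies the invariant -/
lemma step1 {m d i j : ℕ} (hdm : d + 1 ≤ m) (hi : 1 ≤ i)
    {h : ℕ → Prop} (hM : Mp m d h) (hI : InvJ m d i j h)
    (hins : ¬ h i → ¬ InvJ m d i j (fun x => x = i ∨ h x))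
    (hers : h i → Mp m d (fun x => x ≠ i ∧ h x) → ¬ InvJ m d i j (fun x => x ≠ i ∧ h x)) :
    InvJ m d (i + 1) j h := by
  obtain ⟨hj, hjd, hL, hmax, hpat⟩ := hI
  refine ⟨hj, hjd, hL, hmax, ?_⟩
  intro x hxL hQ
  have lt_case : ∀ z, z < i → z ≤ m - d - 1 + j → (h z ↔ pat d j z) := fun z hz hzL =>
    hpat z hzL (by intro y; omega)
  by_cases hxi : x < i
  · exact lt_case x hxi hxL
  by_cases hpi : pat d j i
  swap
  · apply hpat x hxL
    intro y h1 h2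
    rcases Nat.eq_or_lt_of_le h1 with h3 | h3
    · subst h3; exact hpi
    · exact hQ y h3 h2
  by_cases hiL : i = m - d - 1 + j
  · have : x = i := by omega
    subst this
    rw [hiL] at hpi ⊢
    exact ⟨fun _ => hpi, fun _ => hL⟩
  have hhi : h i := by
    by_contra hc
    refine hins hc ⟨hj, hjd, Or.inr hL, ?_, ?_⟩
    · rintro z (rfl | hz)
      · omega
      · exact hmax z hz
    · intro z hzL hzQ
      have hzi : z < i := by
        by_contra hc2
        exact hzQ i le_rfl (by omega) hpi
      rw [← lt_case z hzi hzL]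
      constructor
      · rintro (h1 | h1)
        · omega
        · exact h1
      · exact Or.inr
  have hnM : ¬ Mp m d (fun x => x ≠ i ∧ h x) := by
    intro hM'
    refine hers hhi hM' ⟨hj, hjd, ⟨by omega, hL⟩, fun z hz => hmax z hz.2, ?_⟩
    intro z hzL hzQ
    have hzi : z < i := by
      by_contra hc2
      exact hzQ i le_rfl (by omega) hpi
    rw [← lt_case z hzi hzL]
    exact ⟨fun h => h.2, fun h => ⟨by omega, h⟩⟩
  rcases Nat.eq_or_lt_of_le (Nat.le_of_not_lt hxi) with hxe | hxi'
  · subst hxe; exact ⟨fun _ => hpi, fun _ => hhi⟩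
  have hnx : ¬ pat d j x := hQ x (by omega) le_rfl
  refine ⟨fun hhx => ?_, fun hh => absurd hh hnx⟩
  exfalso
  apply hnM
  obtain ⟨p, n, hp, hn, hnp, hpp, hpn, huniq⟩ := pat_nbr hj hjd hi hpi
  have hxn : x < n := by
    by_contra hc
    exact hQ n (by omega) (by omega) hpn
  have hhp : h p := (lt_case p hp (by omega)).2 hpp
  have hh0 : h 0 := (lt_case 0 (by omega) (by omega)).2 (pat_zero _ _)
  intro k hk
  obtain ⟨z, hz, hz'⟩ := hM k hk
  by_cases hzi : z = i
  · by_cases hkd : k + d ≤ m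
    · by_cases hkp : k ≤ p
      · exact ⟨p, ⟨by omega, hhp⟩, by omega⟩
      · exact ⟨x, ⟨by omega, hhx⟩, by omega⟩
    · exact ⟨0, ⟨by omega, hh0⟩, by omega⟩
  · exact ⟨z, ⟨hzi, hz⟩, hz'⟩

/-- the invariant implies survival: erasing -/
lemma step2 {m d i j : ℕ} (hdm : d + 1 ≤ m) (hi : 1 ≤ i) (hpm : ∀ j, pat d j m)
    {h : ℕ → Prop} (hb : ∀ x, h x → x < m) (hI : InvJ m d (i + 1) j h)
    (hhi : h i) : ¬ Mp m d (fun x => x ≠ i ∧ h x) := by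
  obtain ⟨hj, hjd, hL, hmax, hpat⟩ := hI
  intro hM
  have hpi : pat d j i := (hpat i (hmax i hhi) (by intro y; omega)).1 hhi
  have him := hb i hhi
  obtain ⟨p, n, hp, hn, hnp, hpp, hpn, huniq⟩ := pat_nbr hj hjd hi hpi
  have hnm : n ≤ m := by
    by_contra hc
    have := huniq m (by omega) (by omega) (hpm j)
    omega
  obtain ⟨z, ⟨hzi, hz⟩, hz'⟩ := hM (p + 1) (by omega)
  have hzpn : p < z ∧ z < n := by omega
  have hzL := hmax z hz
  have : pat d j z := by
    refine (hpat z hzL ?_).1 hz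
    intro y h1 h2 hpy
    have := huniq y (by omega) (by omega) hpy
    omega
  exact hzi (huniq z hzpn.1 hzpn.2 this)

/-- the invariant implies survival: inserting -/
lemma step3 {m d i j j' : ℕ} (hdm : d + 1 ≤ m)
    {h : ℕ → Prop} (hI : InvJ m d (i + 1) j h)
    (hhi : ¬ h i) : ¬ InvJ m d i j' (fun x => x = i ∨ h x) := by
  obtain ⟨hj, hjd, hL, hmax, hpat⟩ := hI
  rintro ⟨hj', hjd', hL', hmax', hpat'⟩
  have hiL : i ≠ m - d - 1 + j := by rintro rfl; exact hhi hL
  rcases Nat.lt_or_gt_of_ne hiL with hlt | hgt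
  · have hjj : j' = j := by
      have h1 := hmax' _ (Or.inr hL)
      rcases hL' with h2 | h2
      · omega
      · have := hmax _ h2
        omega
    subst hjj
    have hnp : ¬ pat d j' i := fun hp => hhi ((hpat i hlt.le (by intro y; omega)).2 hp)
    have := (hpat' i hlt.le (by
      intro y h1 h2
      have : y = i := by omega
      subst this; exact hnp)).1 (Or.inl rfl)
    exact hnp this
  · have h1 := hmax' i (Or.inl rfl)
    have hhj : h j := (hpat j (by omega) (by intro y; omega)).2 (pat_j _ _)
    have := (hpat' j (by omega) (by intro y; omega)).1 (Or.inr hhj)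
    have := pat_small hjd this
    omega

lemma InvJ_mono {m d i j : ℕ} {h : ℕ → Prop} (hI : InvJ m d (i + 1) j h) : InvJ m d i j h := by
  obtain ⟨hj, hjd, hL, hmax, hpat⟩ := hI
  exact ⟨hj, hjd, hL, hmax, fun x hx hQ => hpat x hx (fun y h1 h2 => hQ y (by omega) h2)⟩

/-- final form -/
lemma final {m d t j : ℕ} (ht : 1 ≤ t) (hm : m = t * (d + 1)) (hj : 1 ≤ j) (hjd : j ≤ d)
    {h : ℕ → Prop} :
    (InvJ m d m j h ↔
      ∀ x, h x ↔ ∃ r, r < t ∧ (x = r * (d + 1) ∨ x = j + r * (d + 1))) := by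
  obtain ⟨s, rfl⟩ : ∃ s, t = s + 1 := ⟨t - 1, by omega⟩
  have e : (s + 1) * (d + 1) = s * (d + 1) + (d + 1) := by ring
  have eL : m - d - 1 + j = s * (d + 1) + j := by omega
  have aux : ∀ x, (∃ r, r < s + 1 ∧ (x = r * (d + 1) ∨ x = j + r * (d + 1))) ↔
      (x ≤ s * (d + 1) + j ∧ pat d j x) := by
    intro x
    constructor
    · rintro ⟨r, hr, hx⟩
      have : r * (d + 1) ≤ s * (d + 1) := Nat.mul_le_mul_right _ (by omega)
      exact ⟨by omega, r, hx⟩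
    · rintro ⟨hx, r, hr⟩
      exact ⟨r, lt_of_mul (D := d + 1) (by omega), hr⟩
  simp only [aux]
  constructor
  · rintro ⟨-, -, hL, hmax, hpat⟩ x
    rw [eL] at hL hmax hpat
    by_cases hx : x ≤ s * (d + 1) + j
    · rw [hpat x hx (by intro y; omega)]; simp [hx]
    · exact ⟨fun hh => absurd (hmax x hh) hx, fun hh => absurd hh.1 hx⟩
  · intro H
    refine ⟨hj, hjd, ?_⟩
    rw [eL]
    refine ⟨(H _).2 ⟨le_rfl, s, by omega⟩, fun x hx => ((H x).1 hx).1, fun x hx _ => ?_⟩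
    rw [H x]; simp [hx]

lemma final_M {m d t j : ℕ} (hm : m = t * (d + 1)) (hj : 1 ≤ j) (hjd : j ≤ d)
    {h : ℕ → Prop}
    (H : ∀ x, h x ↔ ∃ r, r < t ∧ (x = r * (d + 1) ∨ x = j + r * (d + 1))) : Mp m d h := by
  intro k hk
  have h1 := Nat.div_add_mod k (d + 1)
  have h2 := Nat.mod_lt k (show 0 < d + 1 by omega)
  generalize k / (d + 1) = q at h1
  generalize k % (d + 1) = s at h1 h2
  rw [Nat.mul_comm] at h1
  have hqt : q < t := lt_of_mul (D := d + 1) (by omega)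
  have e : (q + 1) * (d + 1) = q * (d + 1) + (d + 1) := by ring
  by_cases hs0 : s = 0
  · exact ⟨q * (d + 1), (H _).2 ⟨q, hqt, Or.inl rfl⟩, by omega⟩
  by_cases hsj : s ≤ j
  · exact ⟨j + q * (d + 1), (H _).2 ⟨q, hqt, Or.inr rfl⟩, by omega⟩
  by_cases hqt' : q + 1 < t
  · exact ⟨(q + 1) * (d + 1), (H _).2 ⟨q + 1, hqt', Or.inl rfl⟩, by omega⟩
  · have : t = q + 1 := by omega
    subst this
    exact ⟨0, (H _).2 ⟨0, by omega, by simp⟩, by omega⟩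

/-! ### Set layer -/

lemma mem_stepSurv {α : Type*} [DecidableEq α] {x : α} {T : Set (Finset α)} {σ : Finset α} :
    σ ∈ stepSurv x T ↔ σ ∈ T ∧ (x ∉ σ → insert x σ ∉ T) ∧ (x ∈ σ → σ.erase x ∉ T) := by
  unfold stepSurv stepS
  simp only [Set.mem_diff, Set.mem_union, Set.mem_setOf_eq, Set.mem_image, not_or]
  constructor
  · rintro ⟨h1, h2, h3⟩
    refine ⟨h1, fun hx hi => h2 ⟨h1, hx, hi⟩, fun hx he => h3 ⟨σ.erase x, ⟨he, by simp, ?_⟩, ?_⟩⟩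
    · rwa [Finset.insert_erase hx]
    · rw [Finset.insert_erase hx]
  · rintro ⟨h1, h2, h3⟩
    refine ⟨h1, fun h => h2 h.2.1 h.2.2, ?_⟩
    rintro ⟨τ, ⟨h4, h5, h6⟩, rfl⟩
    apply h3 (by simp)
    rwa [Finset.erase_insert h5]

lemma phase_take_succ {α : Type*} [DecidableEq α] {m : ℕ} (f : Fin m → α) (T : Set (Finset α))
    (i : ℕ) (hi : i < m) :
    phase T (((List.finRange m).map f).take (i + 1)) =
      stepSurv (f ⟨i, hi⟩) (phase T (((List.finRange m).map f).take i)) := by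
  unfold phase
  rw [List.take_succ_eq_append_getElem (by simpa using hi), List.foldl_append]
  simp

lemma phase_take_all {α : Type*} [DecidableEq α] {m : ℕ} (f : Fin m → α) (T : Set (Finset α)) :
    phase T (((List.finRange m).map f).take m) = phase T ((List.finRange m).map f) := by
  rw [List.take_of_length_le (by simp)]

lemma phase_diff {α : Type*} [DecidableEq α] {m : ℕ} (f : Fin m → α) (T : Set (Finset α))
    (n : ℕ) (hn : n ≤ m) :
    phase T (((List.finRange m).map f).take n) = T \ ⋃ i : Fin m, ⋃ _ : i.val < n,
      (stepS (f i) (phase T (((List.finRange m).map f).take i.val)) ∪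
        (insert (f i)) '' (stepS (f i) (phase T (((List.finRange m).map f).take i.val)))) := by
  induction n with
  | zero => simp [phase]
  | succ n ih =>
    rw [phase_take_succ f T n (by omega), stepSurv]
    conv_lhs => rw [Set.diff_eq]; lhs; rw [ih (by omega)]
    ext σ
    simp only [Set.mem_inter_iff, Set.mem_diff, Set.mem_compl_iff, Set.mem_iUnion, not_exists]
    constructor
    · rintro ⟨⟨h1, h2⟩, h3⟩
      refine ⟨h1, fun i hi => ?_⟩
      rcases Nat.lt_succ_iff_lt_or_eq.1 hi with h | h
      · exact h2 i h
      · subst h; exact h3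
    · rintro ⟨h1, h2⟩
      exact ⟨⟨h1, fun i hi => h2 i (by omega)⟩, h2 ⟨n, by omega⟩ (by simp)⟩

lemma setC_eq (m d : ℕ) : setC m d = phase (setM m d) (listB m) := by
  have hA := phase_diff (m := m) Sum.inl (faceP m d) m le_rfl
  have hB := phase_diff (m := m) Sum.inr (setM m d) m le_rfl
  rw [phase_take_all] at hA hB
  unfold listB
  rw [hB]
  unfold setC
  conv_rhs => lhs; unfold setM; unfold listA; rw [hA]
  rw [Set.diff_diff]
  simp only [Fin.is_lt, Set.iUnion_true]
  rfl

lemma adj_iff {m d : ℕ} (i j : Fin m) :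
    (Gmd m d).Adj (Sum.inl i) (Sum.inr j) ↔ (j.val + m - i.val) % m < d := by
  unfold Gmd
  rw [SimpleGraph.fromRel_adj]
  constructor
  · rintro ⟨-, ⟨i', j', h1, h2, h3⟩ | ⟨i', j', h1, h2, h3⟩⟩
    · cases h1; cases h2; exact h3
    · cases h1
  · intro h
    exact ⟨by simp, Or.inl ⟨i, j, rfl, rfl, h⟩⟩

lemma not_adj_ll {m d : ℕ} (i j : Fin m) : ¬ (Gmd m d).Adj (Sum.inl i) (Sum.inl j) := by
  unfold Gmd
  rw [SimpleGraph.fromRel_adj]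
  rintro ⟨-, ⟨i', j', h1, h2, h3⟩ | ⟨i', j', h1, h2, h3⟩⟩
  · cases h2
  · cases h2

lemma not_adj_rr {m d : ℕ} (i j : Fin m) : ¬ (Gmd m d).Adj (Sum.inr i) (Sum.inr j) := by
  unfold Gmd
  rw [SimpleGraph.fromRel_adj]
  rintro ⟨-, ⟨i', j', h1, h2, h3⟩ | ⟨i', j', h1, h2, h3⟩⟩
  · cases h1
  · cases h1

lemma isInd_iff {m d : ℕ} (σ : Finset (Fin m ⊕ Fin m)) :
    σ ∈ faceP m d ↔ ∀ i j, Sum.inl i ∈ σ → Sum.inr j ∈ σ → ¬ (Gmd m d).Adj (Sum.inl i) (Sum.inr j) := by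
  constructor
  · intro h i j hi hj
    exact h _ hi _ hj
  · rintro h (i | i) hi (j | j) hj
    · exact not_adj_ll i j
    · exact h i j hi hj
    · exact fun h' => h j i hj hi h'.symm
    · exact not_adj_rr i j

lemma phaseA {m d : ℕ} (n : ℕ) (hn : n ≤ m) (σ : Finset (Fin m ⊕ Fin m)) :
    σ ∈ phase (faceP m d) (((List.finRange m).map Sum.inl).take n) ↔
      σ ∈ faceP m d ∧ ∀ i : Fin m, i.val < n →
        ∃ j, Sum.inr j ∈ σ ∧ (Gmd m d).Adj (Sum.inl i) (Sum.inr j) := by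
  induction n generalizing σ with
  | zero => simp [phase]
  | succ n ih =>
    rw [phase_take_succ _ _ n (by omega), mem_stepSurv]
    simp only [ih (by omega)]
    constructor
    · rintro ⟨⟨h1, h2⟩, h3, h4⟩
      refine ⟨h1, fun i hi => ?_⟩
      rcases Nat.lt_succ_iff_lt_or_eq.1 hi with h | h
      · exact h2 i h
      have hin : i = ⟨n, by omega⟩ := Fin.ext h
      rw [← hin] at h3 h4
      by_contra hc
      push Not at hc
      rw [isInd_iff] at h1
      by_cases hi : Sum.inl i ∈ σ
      · apply h4 hi
        refine ⟨?_, ?_⟩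
        · rw [isInd_iff]
          intro a b ha hb
          exact h1 a b (Finset.mem_of_mem_erase ha) (Finset.mem_of_mem_erase hb)
        · intro a ha
          obtain ⟨b, hb, hb'⟩ := h2 a ha
          exact ⟨b, by simpa using hb, hb'⟩
      · apply h3 hi
        refine ⟨?_, ?_⟩
        · rw [isInd_iff]
          intro a b ha hb
          simp only [Finset.mem_insert, Sum.inl.injEq, reduceCtorEq, false_or] at ha hb
          rcases ha with rfl | ha
          · exact hc b hb
          · exact h1 a b ha hb
        · intro a ha
          obtain ⟨b, hb, hb'⟩ := h2 a ha
          exact ⟨b, by simpa using hb, hb'⟩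
    · rintro ⟨h1, h2⟩
      obtain ⟨b, hb, hb'⟩ := h2 ⟨n, by omega⟩ (by simp)
      refine ⟨⟨h1, fun i hi => h2 i (by omega)⟩, fun _ h => ?_, fun h => ?_⟩
      · exact (isInd_iff _).1 h.1 _ b (by simp) (by simpa using hb) hb'
      · exact absurd hb' ((isInd_iff _).1 h1 _ b h hb)

lemma mod_iff {m d k x : ℕ} (hdm : d ≤ m) (hk : k < m) (hx : x < m) :
    (x + m - k) % m < d ↔ ((k ≤ x ∧ x < k + d) ∨ x + m < k + d) := by
  by_cases h : k ≤ x
  · have : x + m - k = (x - k) + m := by omega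
    rw [this, Nat.add_mod_right, Nat.mod_eq_of_lt (by omega)]
    omega
  · rw [Nat.mod_eq_of_lt (by omega)]
    omega

lemma mem_setM {m d : ℕ} (hdm : d ≤ m) (σ : Finset (Fin m ⊕ Fin m)) :
    σ ∈ setM m d ↔ onlyB m σ ∧ Mp m d (hasB m σ) := by
  unfold setM listA
  rw [← phase_take_all, phaseA m le_rfl, isInd_iff]
  constructor
  · rintro ⟨h1, h2⟩
    refine ⟨?_, ?_⟩
    · rintro (i | j) hv
      · obtain ⟨b, hb, hb'⟩ := h2 i i.2
        exact absurd hb' (h1 i b hv hb)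
      · exact ⟨j, rfl⟩
    · intro k hk
      obtain ⟨b, hb, hb'⟩ := h2 ⟨k, hk⟩ hk
      exact ⟨b.val, ⟨b, rfl, hb⟩, (mod_iff hdm hk b.2).1 ((adj_iff _ _).1 hb')⟩
  · rintro ⟨h1, h2⟩
    refine ⟨fun i j hi _ => ?_, fun i _ => ?_⟩
    · obtain ⟨j, hj⟩ := h1 _ hi
      cases hj
    · obtain ⟨x, ⟨b, rfl, hb⟩, hx⟩ := h2 i.val i.2
      exact ⟨b, hb, (adj_iff _ _).2 ((mod_iff hdm i.2 b.2).2 hx)⟩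

lemma hasB_lt {m : ℕ} {σ : Finset (Fin m ⊕ Fin m)} (x : ℕ) (h : hasB m σ x) : x < m := by
  obtain ⟨j, rfl, -⟩ := h
  exact j.2

lemma hasB_val {m : ℕ} {σ : Finset (Fin m ⊕ Fin m)} (i : Fin m) :
    hasB m σ i.val ↔ Sum.inr i ∈ σ := by
  constructor
  · rintro ⟨j, h, hj⟩
    rwa [← Fin.ext h]
  · exact fun h => ⟨i, rfl, h⟩

lemma hasB_insert {m : ℕ} (σ : Finset (Fin m ⊕ Fin m)) (i : Fin m) :
    hasB m (insert (Sum.inr i) σ) = fun x => x = i.val ∨ hasB m σ x := by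
  funext x
  apply propext
  constructor
  · rintro ⟨j, rfl, hj⟩
    simp only [Finset.mem_insert, Sum.inr.injEq] at hj
    rcases hj with rfl | hj
    · exact Or.inl rfl
    · exact Or.inr ⟨j, rfl, hj⟩
  · rintro (rfl | ⟨j, rfl, hj⟩)
    · exact ⟨i, rfl, by simp⟩
    · exact ⟨j, rfl, by simp [hj]⟩

lemma hasB_erase {m : ℕ} (σ : Finset (Fin m ⊕ Fin m)) (i : Fin m) :
    hasB m (σ.erase (Sum.inr i)) = fun x => x ≠ i.val ∧ hasB m σ x := by
  funext x
  apply propext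
  constructor
  · rintro ⟨j, rfl, hj⟩
    simp only [Finset.mem_erase, ne_eq, Sum.inr.injEq] at hj
    exact ⟨fun h => hj.1 (Fin.ext h), j, rfl, hj.2⟩
  · rintro ⟨h, j, rfl, hj⟩
    refine ⟨j, rfl, ?_⟩
    simp only [Finset.mem_erase, ne_eq, Sum.inr.injEq]
    exact ⟨fun h' => h (by rw [h']), hj⟩

lemma onlyB_insert {m : ℕ} {σ : Finset (Fin m ⊕ Fin m)} (i : Fin m) (h : onlyB m σ) :
    onlyB m (insert (Sum.inr i) σ) := by
  intro v hv
  rcases Finset.mem_insert.1 hv with rfl | hv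
  · exact ⟨i, rfl⟩
  · exact h v hv

lemma onlyB_erase {m : ℕ} {σ : Finset (Fin m ⊕ Fin m)} (i : Fin m) (h : onlyB m σ) :
    onlyB m (σ.erase (Sum.inr i)) := fun v hv => h v (Finset.mem_of_mem_erase hv)

lemma phaseB {m d : ℕ} (hd : 1 ≤ d) (hdm : d + 1 ≤ m) (hpm : ∀ j, pat d j m)
    (n : ℕ) (hn : n + 1 ≤ m) (σ : Finset (Fin m ⊕ Fin m)) :
    σ ∈ phase (setM m d) (((List.finRange m).map Sum.inr).take (n + 1)) ↔
      onlyB m σ ∧ Mp m d (hasB m σ) ∧ ∃ j, InvJ m d (n + 1) j (hasB m σ) := by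
  induction n generalizing σ with
  | zero =>
    rw [phase_take_succ _ _ 0 (by omega), mem_stepSurv]
    simp only [List.take_zero, phase, List.foldl_nil, mem_setM (show d ≤ m by omega),
      hasB_insert, hasB_erase, ← hasB_val]
    constructor
    · rintro ⟨⟨hB, hM⟩, h1, h2⟩
      have h0 : hasB m σ 0 := by
        by_contra hc
        exact h1 hc ⟨onlyB_insert _ hB, Mp_mono (fun x hx => Or.inr hx) hM⟩
      exact ⟨hB, hM, base hd hdm hasB_lt hM h0 (fun h => h2 h0 ⟨onlyB_erase _ hB, h⟩)⟩
    · rintro ⟨hB, hM, j, hI⟩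
      obtain ⟨h0, hE⟩ := base' hdm hI
      exact ⟨⟨hB, hM⟩, fun h => absurd h0 h, fun _ h => hE h.2⟩
  | succ n ih =>
    rw [phase_take_succ _ _ (n + 1) (by omega), mem_stepSurv]
    simp only [ih (by omega), hasB_insert, hasB_erase, ← hasB_val]
    constructor
    · rintro ⟨⟨hB, hM, j, hI⟩, h1, h2⟩
      refine ⟨hB, hM, j, step1 hdm (by omega) hM hI ?_ ?_⟩
      · intro hi hI'
        exact h1 hi ⟨onlyB_insert _ hB, Mp_mono (fun x hx => Or.inr hx) hM, j, hI'⟩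
      · intro hi hM' hI'
        exact h2 hi ⟨onlyB_erase _ hB, hM', j, hI'⟩
    · rintro ⟨hB, hM, j, hI⟩
      refine ⟨⟨hB, hM, j, InvJ_mono hI⟩, ?_, ?_⟩
      · rintro hi ⟨-, -, j', hI'⟩
        exact step3 hdm hI hi hI'
      · rintro hi ⟨-, hM', -⟩
        exact step2 hdm (by omega) hpm hasB_lt hI hi hM'

lemma main {m d t : ℕ} (hd : 1 ≤ d) (ht : 1 ≤ t) (hm : m = t * (d + 1))
    (σ : Finset (Fin m ⊕ Fin m)) : σ ∈ setC m d ↔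
      ∃ j1, 1 ≤ j1 ∧ j1 ≤ d ∧ onlyB m σ ∧
        (∀ j : Fin m, Sum.inr j ∈ σ ↔
          ∃ r, r < t ∧ (j.val = r * (d + 1) ∨ j.val = j1 + r * (d + 1))) := by
  have hdm : d + 1 ≤ m := by rw [hm]; exact Nat.le_mul_of_pos_left _ (by omega)
  obtain ⟨n, hn⟩ : ∃ n, m = n + 1 := ⟨m - 1, by omega⟩
  have hB := phaseB hd hdm (fun j => ⟨t, Or.inl hm⟩) n (by omega) σ
  rw [← hn, phase_take_all] at hB
  rw [setC_eq, listB, hB]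
  have conv : ∀ j1, j1 ≤ d → ((∀ j : Fin m, Sum.inr j ∈ σ ↔
          ∃ r, r < t ∧ (j.val = r * (d + 1) ∨ j.val = j1 + r * (d + 1))) ↔
      ∀ x, hasB m σ x ↔ ∃ r, r < t ∧ (x = r * (d + 1) ∨ x = j1 + r * (d + 1))) := by
    intro j1 hj
    constructor
    · intro H x
      constructor
      · rintro ⟨j, rfl, hj⟩
        exact (H j).1 hj
      · rintro ⟨r, hr, hx⟩
        have h1 : (r + 1) * (d + 1) ≤ t * (d + 1) := Nat.mul_le_mul_right _ hr
        have h2 : (r + 1) * (d + 1) = r * (d + 1) + (d + 1) := by ring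
        have hxm : x < m := by omega
        exact ⟨⟨x, hxm⟩, rfl, (H ⟨x, hxm⟩).2 ⟨r, hr, hx⟩⟩
    · intro H j
      rw [← hasB_val, H]
  constructor
  · rintro ⟨h1, h2, j, hI⟩
    have hj := hI.1
    have hjd := hI.2.1
    exact ⟨j, hj, hjd, h1, (conv j hjd).2 ((final ht hm hj hjd).1 hI)⟩
  · rintro ⟨j, hj, hjd, h1, H⟩
    rw [conv j hjd] at H
    exact ⟨h1, final_M hm hj hjd H, j, (final ht hm hj hjd).2 H⟩

open Classical in
/-- The explicit cell. -/
noncomputable def cell (m d t j1 : ℕ) : Finset (Fin m ⊕ Fin m) :=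
  (Finset.univ.filter (fun j : Fin m =>
    ∃ r, r < t ∧ (j.val = r * (d + 1) ∨ j.val = j1 + r * (d + 1)))).image Sum.inr

lemma mem_cell {m d t j1 : ℕ} (j : Fin m) : Sum.inr j ∈ cell m d t j1 ↔
    ∃ r, r < t ∧ (j.val = r * (d + 1) ∨ j.val = j1 + r * (d + 1)) := by
  simp [cell]

lemma onlyB_cell {m d t j1 : ℕ} : onlyB m (cell m d t j1) := by
  intro v hv
  obtain ⟨j, -, rfl⟩ := Finset.mem_image.1 hv
  exact ⟨j, rfl⟩

lemma eq_cell {m d t j1 : ℕ} {σ : Finset (Fin m ⊕ Fin m)} (h : onlyB m σ)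
    (H : ∀ j : Fin m, Sum.inr j ∈ σ ↔
          ∃ r, r < t ∧ (j.val = r * (d + 1) ∨ j.val = j1 + r * (d + 1))) : σ = cell m d t j1 := by
  ext v
  constructor
  · intro hv
    obtain ⟨j, rfl⟩ := h v hv
    exact (mem_cell j).2 ((H j).1 hv)
  · intro hv
    obtain ⟨j, rfl⟩ := onlyB_cell v hv
    exact (H j).2 ((mem_cell j).1 hv)

lemma card_cell {m d t j1 : ℕ} (hj : 1 ≤ j1) (hjd : j1 ≤ d) (hm : m = t * (d + 1)) :
    (cell m d t j1).card = 2 * t := by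
  classical
  have h1 : (cell m d t j1).card = ((Finset.range t).image (fun r => r * (d + 1)) ∪
      (Finset.range t).image (fun r => j1 + r * (d + 1))).card := by
    rw [cell, Finset.card_image_of_injective _ Sum.inr_injective,
      ← Finset.card_image_of_injective _ (Fin.val_injective (n := m))]
    congr 1
    ext x
    simp only [Finset.mem_image, Finset.mem_filter, Finset.mem_univ, true_and, Finset.mem_union,
      Finset.mem_range]
    constructor
    · rintro ⟨j, ⟨r, hr, h | h⟩, rfl⟩
      · exact Or.inl ⟨r, hr, h.symm⟩
      · exact Or.inr ⟨r, hr, h.symm⟩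
    · have key : ∀ r, r < t → j1 + r * (d + 1) < m := by
        intro r hr
        have h1 : (r + 1) * (d + 1) ≤ t * (d + 1) := Nat.mul_le_mul_right _ hr
        have h2 : (r + 1) * (d + 1) = r * (d + 1) + (d + 1) := by ring
        omega
      rintro (⟨r, hr, rfl⟩ | ⟨r, hr, rfl⟩)
      · exact ⟨⟨r * (d + 1), by have := key r hr; omega⟩, ⟨r, hr, Or.inl rfl⟩, rfl⟩
      · exact ⟨⟨j1 + r * (d + 1), key r hr⟩, ⟨r, hr, Or.inr rfl⟩, rfl⟩
  have inj : Function.Injective (fun r : ℕ => r * (d + 1)) := fun a b h =>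
    Nat.eq_of_mul_eq_mul_right (show 0 < d + 1 by omega) h
  rw [h1, Finset.card_union_of_disjoint, Finset.card_image_of_injective _ inj,
    Finset.card_image_of_injective, Finset.card_range]
  · omega
  · intro a b h
    apply inj
    simpa using h
  · rw [Finset.disjoint_left]
    simp only [Finset.mem_image, Finset.mem_range, not_exists, not_and]
    rintro x ⟨r, -, rfl⟩ s - hs
    have a1 : s < r := lt_of_mul (D := d + 1) (by omega)
    have a2 : r < s + 1 := lt_of_mul (D := d + 1) (by
      have h2 : (s + 1) * (d + 1) = s * (d + 1) + (d + 1) := by ring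
      omega)
    omega

lemma cell_inj {m d t : ℕ} (ht : 1 ≤ t) (hm : m = t * (d + 1)) :
    Set.InjOn (cell m d t) (Finset.Icc 1 d : Set ℕ) := by
  have hdm : d + 1 ≤ m := by rw [hm]; exact Nat.le_mul_of_pos_left _ (by omega)
  intro a ha b hb hab
  simp only [Finset.coe_Icc, Set.mem_Icc] at ha hb
  have h1 : Sum.inr ⟨a, by omega⟩ ∈ cell m d t a := (mem_cell _).2 ⟨0, by omega, by simp⟩
  have hab' : cell m d t a = cell m d t b := hab
  rw [hab', mem_cell] at h1
  obtain ⟨r, -, hr⟩ := h1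
  have := pat_small (d := d) (j := b) (x := a) ha.2 ⟨r, hr⟩
  omega

end Crit

/-- 0-based indices: suppose `m = t(d+1)` with `t ≥ 1`.  Then the critical
cells are exactly the `d` sets `{b_0, b_{j1}, b_{d+1}, b_{j1+(d+1)}, …, b_{(t-1)(d+1)},
b_{j1+(t-1)(d+1)}}` for `j1 ∈ {1, …, d}`; in particular there are exactly `d` critical
cells, each of cardinality `2t`. -/
theorem stmt14 (m d t : ℕ) (hd : 1 ≤ d) (hdm : d ≤ m)
    (ht : 1 ≤ t) (hm : m = t * (d + 1)) :
    (∀ σ : Finset (Fin m ⊕ Fin m), σ ∈ setC m d ↔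
      ∃ j1, 1 ≤ j1 ∧ j1 ≤ d ∧ onlyB m σ ∧
        (∀ j : Fin m, Sum.inr j ∈ σ ↔
          ∃ r, r < t ∧ (j.val = r * (d + 1) ∨ j.val = j1 + r * (d + 1)))) ∧
    (setC m d).ncard = d ∧
    (∀ σ ∈ setC m d, σ.card = 2 * t) := by
  have hmain := Crit.main hd ht hm
  have hset : setC m d = Crit.cell m d t '' (Finset.Icc 1 d : Set ℕ) := by
    ext σ
    rw [hmain]
    constructor
    · rintro ⟨j, hj, hjd, h1, H⟩
      exact ⟨j, by simp [hj, hjd], (Crit.eq_cell h1 H).symm⟩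
    · rintro ⟨j, hj, rfl⟩
      simp only [Finset.coe_Icc, Set.mem_Icc] at hj
      exact ⟨j, hj.1, hj.2, Crit.onlyB_cell, fun _ => Crit.mem_cell _⟩
  refine ⟨hmain, ?_, ?_⟩
  · rw [hset, Set.ncard_image_of_injOn (Crit.cell_inj ht hm), Set.ncard_coe_finset]
    simp
  · intro σ hσ
    rw [hset] at hσ
    obtain ⟨j, hj, rfl⟩ := hσ
    simp only [Finset.coe_Icc, Set.mem_Icc] at hj
    exact Crit.card_cell hj.1 hj.2 hm
end
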